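/- Let G be a graph, let (U, E) be a 3-fat model of the (154 × 154)-grid in G, let W ⊆ V(G) consist of exactly one vertex from each branch set corresponding to a vertex of the 77-th row of the grid, and let {A, B} be a separation of G with |W ∩ A| ≥ 32 and |W ∩ B| ≥ 32. Then A ∩ B contains a set of 32 vertices that is 3-fat 16-path-connected in G. -/

import Mathlib

open SimpleGraph

namespace CGT

/-- Distance between two vertex sets, as an extended natural number. -/
noncomputable def sDist {V : Type*} (G : SimpleGraph V) (U U' : Set V) : ℕ∞ :=
  ⨅ (u : U) (v : U'), G.edist u.1 v.1

/-- The ball of radius `r` around a vertex set `U`. -/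
def gBall {V : Type*} (G : SimpleGraph V) (U : Set V) (r : ℕ) : Set V :=
  {v | ∃ u ∈ U, G.edist u v ≤ (r : ℕ∞)}

/-- A set of vertices is connected if the induced subgraph is connected. -/
def SetConn {V : Type*} (G : SimpleGraph V) (U : Set V) : Prop :=
  (G.induce U).Connected

/-- The vertex set of a walk. -/
def walkSupp {V : Type*} {G : SimpleGraph V} {a b : V} (p : G.Walk a b) : Set V :=
  {v | v ∈ p.support}

/-- `X` separates `Y` and `Z` in `G`: every path with one end in `Y` and one in `Z`
contains a vertex of `X`. -/
def Separates {V : Type*} (G : SimpleGraph V) (X Y Z : Set V) : Prop :=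
  ∀ ⦃y z : V⦄, y ∈ Y → z ∈ Z → ∀ p : G.Walk y z, p.IsPath → ∃ x ∈ X, x ∈ p.support

/-- `f` is an `(M,A)`-quasi-isometry from `G` to `H`.  The two-sided distance bound
`M⁻¹ d_G(u,v) - A ≤ d_H(f u, f v) ≤ M d_G(u,v) + A` is stated multiplied out over `ℕ∞`. -/
structure IsQI {V V' : Type*} (M A : ℕ) (G : SimpleGraph V) (H : SimpleGraph V')
    (f : V → V') : Prop where
  upper : ∀ u v : V, H.edist (f u) (f v) ≤ (M : ℕ∞) * G.edist u v + (A : ℕ∞)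
  lower : ∀ u v : V, G.edist u v ≤ (M : ℕ∞) * H.edist (f u) (f v) + (M : ℕ∞) * (A : ℕ∞)
  dense : ∀ w : V', ∃ v : V, H.edist w (f v) ≤ (A : ℕ∞)

/-- `G` is `(M,A)`-quasi-isometric to `H`. -/
def QIsometric {V V' : Type*} (M A : ℕ) (G : SimpleGraph V) (H : SimpleGraph V') : Prop :=
  ∃ f : V → V', IsQI M A G H f

/-- `X` is a minor of `G`. -/
def HasMinor {V W : Type*} (G : SimpleGraph V) (X : SimpleGraph W) : Prop :=
  ∃ U : W → Set V,
    (∀ x, (U x).Nonempty) ∧ (∀ x, SetConn G (U x)) ∧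
    (∀ ⦃x y⦄, x ≠ y → Disjoint (U x) (U y)) ∧
    ∀ ⦃x y⦄, X.Adj x y → ∃ u ∈ U x, ∃ v ∈ U y, G.Adj u v

/-- The `(a × b)`-grid graph. -/
def gridGraph (a b : ℕ) : SimpleGraph (Fin a × Fin b) :=
  SimpleGraph.fromRel (fun u v =>
    (u.1 = v.1 ∧ u.2.1 + 1 = v.2.1) ∨ (u.2 = v.2 ∧ u.1.1 + 1 = v.1.1))

/-- A `K`-fat model of `X` in `G`: disjoint connected branch sets joined by internally
disjoint branch paths, all pairwise at distance at least `K` except for a branch path and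
the branch sets of its endpoints. -/
structure FatModel {V W : Type*} (G : SimpleGraph V) (X : SimpleGraph W) (K : ℕ) where
  branch : W → Set V
  branch_nonempty : ∀ x, (branch x).Nonempty
  branch_connected : ∀ x, SetConn G (branch x)
  branch_disjoint : ∀ ⦃x y⦄, x ≠ y → Disjoint (branch x) (branch y)
  pathEnd : ∀ ⦃x y⦄, X.Adj x y → V
  path : ∀ ⦃x y⦄ (e : X.Adj x y), G.Walk (pathEnd e) (pathEnd e.symm)
  path_isPath : ∀ ⦃x y⦄ (e : X.Adj x y), (path e).IsPath
  path_symm : ∀ ⦃x y⦄ (e : X.Adj x y), path e.symm = (path e).reverse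
  pathEnd_mem : ∀ ⦃x y⦄ (e : X.Adj x y), pathEnd e ∈ branch x
  path_meets : ∀ ⦃x y⦄ (e : X.Adj x y) (z : W) (v : V), v ∈ (path e).support → v ∈ branch z →
    (z = x ∧ v = pathEnd e) ∨ (z = y ∧ v = pathEnd e.symm)
  path_int_disjoint : ∀ ⦃x y x' y'⦄ (e : X.Adj x y) (e' : X.Adj x' y'), s(x, y) ≠ s(x', y') →
    ∀ v, v ∈ (path e).support → v ∈ (path e').support → v = pathEnd e' ∨ v = pathEnd e'.symm
  fat_branch : ∀ ⦃x y⦄, x ≠ y → (K : ℕ∞) ≤ sDist G (branch x) (branch y)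
  fat_path_branch : ∀ ⦃x y⦄ (e : X.Adj x y) (z : W), z ≠ x → z ≠ y →
    (K : ℕ∞) ≤ sDist G (walkSupp (path e)) (branch z)
  fat_paths : ∀ ⦃x y x' y'⦄ (e : X.Adj x y) (e' : X.Adj x' y'), s(x, y) ≠ s(x', y') →
    (K : ℕ∞) ≤ sDist G (walkSupp (path e)) (walkSupp (path e'))

/-- `X` is a `K`-fat minor of `G`. -/
def IsFatMinor {V W : Type*} (G : SimpleGraph V) (X : SimpleGraph W) (K : ℕ) : Prop :=
  Nonempty (FatModel G X K)

/-- `W` is a `K`-fat `n`-path-connected set in `G`. -/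
def FatPathConn {V : Type*} (G : SimpleGraph V) (K n : ℕ) (W : Set V) : Prop :=
  (∃ S : Finset V, ↑S ⊆ W ∧ 2 * n ≤ S.card) ∧
  (∀ ⦃u v : V⦄, u ∈ W → v ∈ W → u ≠ v → (K : ℕ∞) ≤ G.edist u v) ∧
  ∀ l : ℕ, l ≤ n → ∀ A B : Finset V, ↑A ⊆ W → ↑B ⊆ W → A.card = l → B.card = l →
    ∃ (a b : Fin l → V) (P : ∀ i : Fin l, G.Walk (a i) (b i)),
      (∀ i, (P i).IsPath) ∧ (∀ i, a i ∈ A ∧ b i ∈ B) ∧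
      ∀ i j, i ≠ j → (K : ℕ∞) ≤ sDist G (walkSupp (P i)) (walkSupp (P j))

end CGT

namespace Ghdm

/-- Raw vertex codes for the graphs `G_{h,d,m}`:
`path k` is the `k`-th vertex of the base path; `tree j i p` is the vertex at position `p`
of the `i`-th binary tree at level `j` (the root being position `[]`); and
`spine j i k t e s` is the `s`-th internal vertex of the spine from the `k`-th leaf of that
tree to the `e`-th element of the `t`-th local gluing set at level `j-1`. -/
inductive Raw : Type where
  | path (k : ℕ)
  | tree (j i : ℕ) (p : List Bool)
  | spine (j i k t e s : ℕ)
deriving DecidableEq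

/-- `N = 2^{h+1} - 1`, the number of copies of `G_{h,d,m-1}` glued inside `G_{h,d,m}`. -/
def NN (h : ℕ) : ℕ := 2 ^ (h + 1) - 1

/-- Canonical representative of a raw vertex code: all tree roots are identified with the
single root `tree m 1 []`, and the leftmost leaf of tree `i > 1` is identified with the
rightmost leaf of tree `i - 1` (consecutive copies are glued along these leaves). -/
def canon (h m : ℕ) : Raw → Raw
  | .tree j i p =>
    if p = [] then .tree m 1 []
    else if p = List.replicate h false ∧ 1 < i then .tree j (i - 1) (List.replicate h true)
    else .tree j i p
  | x => x

/-- The `q`-bit binary representation of `i` (most significant bit first);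
`false` means "left". -/
def natToBits (q i : ℕ) : List Bool := (List.range q).map fun a => Nat.testBit i (q - 1 - a)

/-- Position of the `k`-th leaf (1-based, from the left) in a binary tree of height `h`. -/
def leafPos (h k : ℕ) : List Bool := natToBits h (k - 1)

/-- The `e`-th element of the `g`-th gluing set `V^{jv}_g` (at level `jv`):
its element `e = 1` is an anchor of the base path, and its element `e ≥ 2` is a shared
extreme leaf of the trees at level `e`. -/
def VsetElem (h d jv g e : ℕ) : Raw :=
  if e = 1 then .path ((g - 1) * NN h ^ (jv - 1) * (d + 1))
  else if (g - 1) * NN h ^ (jv - e) = 0 then .tree e 1 (List.replicate h false)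
  else .tree e ((g - 1) * NN h ^ (jv - e)) (List.replicate h true)

/-- Valid (canonical) vertex codes of `G_{h,d,m}`. -/
def Valid (h d m : ℕ) : Raw → Prop
  | .path k => k ≤ (d + 1) * NN h ^ (m - 1)
  | .tree j i p => 2 ≤ j ∧ j ≤ m ∧ 1 ≤ i ∧ i ≤ NN h ^ (m - j) ∧ p.length ≤ h ∧
      (p = [] → j = m ∧ i = 1) ∧ (p = List.replicate h false → p ≠ [] → i = 1)
  | .spine j i k t e s => 2 ≤ j ∧ j ≤ m ∧ 1 ≤ i ∧ i ≤ NN h ^ (m - j) ∧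
      1 ≤ k ∧ k ≤ 2 ^ h ∧ (t = 2 * k - 2 ∨ t = 2 * k + 1) ∧ 1 ≤ t ∧ t ≤ 2 ^ (h + 1) ∧
      1 ≤ e ∧ e ≤ j - 1 ∧ 1 ≤ s ∧ s ≤ d

/-- Generating adjacencies between raw vertex codes: consecutive base path vertices,
parent/child in the binary trees, consecutive spine vertices, a spine and the leaf it
starts at, a spine and the gluing-set vertex it ends at (the latter collapsed to a single
edge when `d = 0`). -/
inductive rawAdj (h d : ℕ) : Raw → Raw → Prop
  | base (k : ℕ) : rawAdj h d (.path k) (.path (k + 1))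
  | child (j i : ℕ) (p : List Bool) (b : Bool) : p.length < h →
      rawAdj h d (.tree j i p) (.tree j i (p ++ [b]))
  | step (j i k t e s : ℕ) : rawAdj h d (.spine j i k t e s) (.spine j i k t e (s + 1))
  | toLeaf (j i k t e : ℕ) : rawAdj h d (.tree j i (leafPos h k)) (.spine j i k t e 1)
  | toV (j i k t e : ℕ) :
      rawAdj h d (.spine j i k t e d) (VsetElem h d (j - 1) ((i - 1) * NN h + t) e)
  | short (j i k t e : ℕ) : d = 0 → 1 ≤ k → k ≤ 2 ^ h → (t = 2 * k - 2 ∨ t = 2 * k + 1) →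
      1 ≤ t → t ≤ 2 ^ (h + 1) → 1 ≤ e → e ≤ j - 1 →
      rawAdj h d (.tree j i (leafPos h k)) (VsetElem h d (j - 1) ((i - 1) * NN h + t) e)

/-- Adjacency of canonical representatives. -/
def rel (h d m : ℕ) (x y : Raw) : Prop :=
  ∃ a b, rawAdj h d a b ∧ x = canon h m a ∧ y = canon h m b

/-- The vertex set of `G_{h,d,m}`. -/
def Verts (h d m : ℕ) : Set Raw := {x | Valid h d m x}

/-- The graph `G_{h,d,m}`. -/
def G (h d m : ℕ) : SimpleGraph (Verts h d m) :=
  (SimpleGraph.fromRel (rel h d m)).induce (Verts h d m)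

/-- Lift a set of raw codes to a set of vertices of `G_{h,d,m}`. -/
def lift {h d m : ℕ} (S : Set Raw) : Set (Verts h d m) := Subtype.val ⁻¹' S

/-- The root `R(G_{h,d,m})`. -/
def RootR (m : ℕ) : Raw := .tree m 1 []

/-- The gluing set `V^{jv}_g` of `G_{h,d,m}`, as a set of raw codes. -/
def VsetRaw (h d m jv g : ℕ) : Set Raw :=
  {x | ∃ e, 1 ≤ e ∧ e ≤ jv ∧ x = canon h m (VsetElem h d jv g e)}

/-- The set `S(G_{h,d,m})`. -/
def SsetR (h d m : ℕ) : Set Raw :=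
  VsetRaw h d m (m - 1) 1 ∪ {canon h m (.tree m 1 (leafPos h 1))}

/-- The set `T(G_{h,d,m})`. -/
def TsetR (h d m : ℕ) : Set Raw :=
  VsetRaw h d m (m - 1) (2 ^ (h + 1)) ∪ {canon h m (.tree m 1 (leafPos h (2 ^ h)))}

/-- For a vertex of the top binary tree at position `p`, the (1-based) index of the
leftmost leaf of the top tree below it. -/
def kOf (h : ℕ) (p : List Bool) : ℕ :=
  (p.foldl (fun a b => 2 * a + if b then 1 else 0) 0) * 2 ^ (h - p.length) + 1

/-- `S(Δ(x))` for the vertex `x` of the top binary tree `B(G_{h,d,m})` at position `p`. -/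
def SDeltaR (h d m : ℕ) (p : List Bool) : Set Raw :=
  VsetRaw h d m (m - 1) (2 * kOf h p - 1) ∪ {canon h m (.tree m 1 (leafPos h (kOf h p)))}

/-- The leaf of `B(G_{h,d,m})` immediately to the left of the leftmost leaf below the
top-tree vertex at position `p`; it is the unique leaf joined by spines to `S(Δ(x))`. -/
def leafLeftR (h m : ℕ) (p : List Bool) : Raw :=
  canon h m (.tree m 1 (leafPos h (kOf h p - 1)))

end Ghdm

namespace CGT

theorem matchLem {n : ℕ} : ∀ (k : ℕ) (S T : Finset (Fin n)), S.card = k → T.card = k →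
    ∃ s t : Fin k → Fin n, (∀ i, s i ∈ S) ∧ (∀ i, t i ∈ T) ∧
      ∀ i j, i < j → ((s j < s i ∧ s j < t i) ∨ (s i < s j ∧ t i < s j)) ∧
        ((t j < s i ∧ t j < t i) ∨ (s i < t j ∧ t i < t j)) := by
  intro k
  induction k with
  | zero =>
    intro S T _ _
    exact ⟨fun i => i.elim0, fun i => i.elim0, fun i => i.elim0, fun i => i.elim0,
      fun i => i.elim0⟩
  | succ k ih =>
    intro S T hS hT
    have hne : (S ×ˢ T).Nonempty := by
      apply Finset.Nonempty.product
      · exact Finset.card_pos.mp (by omega)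
      · exact Finset.card_pos.mp (by omega)
    obtain ⟨⟨a, b⟩, hab, hmin⟩ := Finset.exists_min_image (S ×ˢ T)
      (fun q => ((q.1 : ℕ) - (q.2 : ℕ)) + ((q.2 : ℕ) - (q.1 : ℕ))) hne
    rw [Finset.mem_product] at hab
    obtain ⟨ha, hb⟩ := hab
    simp only at ha hb
    obtain ⟨s, t, hs, ht, hst⟩ := ih (S.erase a) (T.erase b)
      (by rw [Finset.card_erase_of_mem ha]; omega) (by rw [Finset.card_erase_of_mem hb]; omega)
    have hs' : ∀ i, s i ∈ S ∧ s i ≠ a := fun i => by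
      have := hs i; rw [Finset.mem_erase] at this; exact ⟨this.2, this.1⟩
    have ht' : ∀ i, t i ∈ T ∧ t i ≠ b := fun i => by
      have := ht i; rw [Finset.mem_erase] at this; exact ⟨this.2, this.1⟩
    refine ⟨Fin.cons a s, Fin.cons b t, ?_, ?_, ?_⟩
    · intro i
      refine Fin.cases ?_ (fun i => ?_) i
      · simpa using ha
      · simpa using (hs' i).1
    · intro i
      refine Fin.cases ?_ (fun i => ?_) i
      · simpa using hb
      · simpa using (ht' i).1
    · intro i j
      refine Fin.cases ?_ (fun j => ?_) j
      · intro h; exact absurd h (Fin.not_lt_zero _)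
      · refine Fin.cases ?_ (fun i => ?_) i
        · intro _
          simp only [Fin.cons_zero, Fin.cons_succ]
          have h1 := hmin (s j, b) (Finset.mem_product.mpr ⟨(hs' j).1, hb⟩)
          have h2 := hmin (a, t j) (Finset.mem_product.mpr ⟨ha, (ht' j).1⟩)
          have h3 := (hs' j).2
          have h4 := (ht' j).2
          have h5 : (s j) ≠ b ∨ a = b := by
            by_contra hc
            push Not at hc
            rw [hc.1] at h1
            have := hc.2
            simp only at h1
            omega
          have h6 : (t j) ≠ a ∨ a = b := by
            by_contra hc
            push Not at hc
            rw [hc.1] at h2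
            have := hc.2
            simp only at h2
            omega
          simp only at h1 h2
          constructor
          · rcases h5 with h5 | h5 <;> omega
          · rcases h6 with h6 | h6 <;> omega
        · intro hij
          simp only [Fin.cons_succ]
          exact hst i j (by simpa using hij)

/-- union of branch sets and branch paths inside `S` -/
def fatSet {V W : Type*} {G : SimpleGraph V} {X : SimpleGraph W} {K : ℕ}
    (M : FatModel G X K) (S : Set W) : Set V :=
  {u | (∃ x ∈ S, u ∈ M.branch x) ∨
    ∃ (x y : W) (e : X.Adj x y), x ∈ S ∧ y ∈ S ∧ u ∈ (M.path e).support}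

theorem fatSet_mono {V W : Type*} {G : SimpleGraph V} {X : SimpleGraph W} {K : ℕ}
    (M : FatModel G X K) {S T : Set W} (h : S ⊆ T) : fatSet M S ⊆ fatSet M T := by
  rintro u (⟨x, hx, hu⟩ | ⟨x, y, e, hx, hy, hu⟩)
  · exact Or.inl ⟨x, h hx, hu⟩
  · exact Or.inr ⟨x, y, e, h hx, h hy, hu⟩

theorem le_edist_of {V : Type*} {G : SimpleGraph V} {U U' : Set V} {K : ℕ∞}
    (h : K ≤ sDist G U U') {u v : V} (hu : u ∈ U) (hv : v ∈ U') : K ≤ G.edist u v :=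
  h.trans ((iInf_le _ (⟨u, hu⟩ : U)).trans (iInf_le _ (⟨v, hv⟩ : U')))

theorem le_sDist {V : Type*} {G : SimpleGraph V} {U U' : Set V} {K : ℕ∞}
    (h : ∀ u ∈ U, ∀ v ∈ U', K ≤ G.edist u v) : K ≤ sDist G U U' :=
  le_iInf fun u => le_iInf fun v => h u.1 u.2 v.1 v.2

theorem fatSet_dist {V W : Type*} {G : SimpleGraph V} {X : SimpleGraph W} {K : ℕ}
    (M : FatModel G X K) {S T : Set W} (h : ∀ x ∈ S, x ∉ T) {u v : V}
    (hu : u ∈ fatSet M S) (hv : v ∈ fatSet M T) : (K : ℕ∞) ≤ G.edist u v := by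
  have hne : ∀ {x y}, x ∈ S → y ∈ T → x ≠ y := fun hx hy e => h _ hx (e ▸ hy)
  rcases hu with ⟨x, hx, hu⟩ | ⟨x, y, e, hx, hy, hu⟩ <;>
    rcases hv with ⟨x', hx', hv⟩ | ⟨x', y', e', hx', hy', hv⟩
  · exact le_edist_of (M.fat_branch (hne hx hx')) hu hv
  · rw [SimpleGraph.edist_comm]
    exact le_edist_of (M.fat_path_branch e' x (hne hx hx') (hne hx hy')) hv hu
  · exact le_edist_of (M.fat_path_branch e x' (hne hx hx').symm (hne hy hx').symm) hu hv
  · refine le_edist_of (M.fat_paths e e' ?_) hu hv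
    intro hs
    rw [Sym2.eq_iff] at hs
    rcases hs with hs | hs
    · exact hne hx hx' hs.1
    · exact hne hx hy' hs.1

/-- joined by a walk inside `F` -/
def Jn {V : Type*} (G : SimpleGraph V) (F : Set V) (u v : V) : Prop :=
  ∃ p : G.Walk u v, ∀ z ∈ p.support, z ∈ F

theorem Jn.symm {V : Type*} {G : SimpleGraph V} {F : Set V} {u v : V} (h : Jn G F u v) :
    Jn G F v u := by
  obtain ⟨p, hp⟩ := h
  exact ⟨p.reverse, fun z hz => hp z (by simpa using hz)⟩

theorem Jn.trans {V : Type*} {G : SimpleGraph V} {F : Set V} {u v w : V} (h : Jn G F u v)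
    (h' : Jn G F v w) : Jn G F u w := by
  obtain ⟨p, hp⟩ := h
  obtain ⟨q, hq⟩ := h'
  refine ⟨p.append q, fun z hz => ?_⟩
  rw [SimpleGraph.Walk.mem_support_append_iff] at hz
  exact hz.elim (hp z) (hq z)

theorem Jn.mono {V : Type*} {G : SimpleGraph V} {F F' : Set V} {u v : V} (h : Jn G F u v)
    (hF : F ⊆ F') : Jn G F' u v := by
  obtain ⟨p, hp⟩ := h
  exact ⟨p, fun z hz => hF (hp z hz)⟩

theorem Jn.refl {V : Type*} (G : SimpleGraph V) {F : Set V} {u : V} (h : u ∈ F) : Jn G F u u :=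
  ⟨SimpleGraph.Walk.nil, fun z hz => by
    rw [SimpleGraph.Walk.support_nil, List.mem_singleton] at hz; exact hz ▸ h⟩

theorem Jn.adj {V : Type*} {G : SimpleGraph V} {F : Set V} {u v : V} (h : G.Adj u v)
    (hu : u ∈ F) (hv : v ∈ F) : Jn G F u v :=
  ⟨h.toWalk, fun z hz => by
    simp at hz
    rcases hz with rfl | rfl <;> assumption⟩

theorem Jn.of_conn {V : Type*} {G : SimpleGraph V} {U : Set V} (h : SetConn G U) {u v : V}
    (hu : u ∈ U) (hv : v ∈ U) : Jn G U u v := by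
  obtain ⟨p⟩ := h.preconnected ⟨u, hu⟩ ⟨v, hv⟩
  have key : ∀ z ∈ (p.map (SimpleGraph.Embedding.induce (G := G) U).toHom).support, z ∈ U := by
    intro z hz
    rw [SimpleGraph.Walk.support_map, List.mem_map] at hz
    obtain ⟨a, _, rfl⟩ := hz
    exact a.2
  exact ⟨p.map (SimpleGraph.Embedding.induce (G := G) U).toHom, key⟩

theorem Jn.fat {V W : Type*} {G : SimpleGraph V} {X : SimpleGraph W} {K : ℕ}
    (M : FatModel G X K) {S : Set W} {x y : W} (h : Jn X S x y) {u v : V}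
    (hu : u ∈ M.branch x) (hv : v ∈ M.branch y) : Jn G (fatSet M S) u v := by
  obtain ⟨p, hp⟩ := h
  induction p generalizing u with
  | nil =>
    exact (Jn.of_conn (M.branch_connected _) hu hv).mono
      (fun z hz => Or.inl ⟨_, hp _ (by simp), hz⟩)
  | cons e p ih =>
    have h1 := (Jn.of_conn (M.branch_connected _) hu (M.pathEnd_mem e)).mono
      (F' := fatSet M S) (fun z hz => Or.inl ⟨_, hp _ (by simp), hz⟩)
    have h2 : Jn G (fatSet M S) (M.pathEnd e) (M.pathEnd e.symm) :=
      ⟨M.path e, fun z hz => Or.inr ⟨_, _, e, hp _ (by simp), hp _ (by simp), hz⟩⟩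
    have h3 := ih (M.pathEnd_mem e.symm) hv (fun z hz => hp z (by simp [hz]))
    exact h1.trans (h2.trans h3)

theorem crossLem {V : Type*} {G : SimpleGraph V} {A B : Set V} (hAB : A ∪ B = Set.univ)
    (hsep : ∀ a ∈ A \ B, ∀ b ∈ B \ A, ¬ G.Adj a b) {F : Set V} {u v : V} (h : Jn G F u v)
    (hu : u ∈ A) (hv : v ∈ B) : ∃ z ∈ A ∩ B, Jn G F u z := by
  obtain ⟨p, hp⟩ := h
  induction p with
  | nil => exact ⟨_, ⟨hu, hv⟩, Jn.refl G (hp _ (by simp))⟩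
  | @cons a b c e p ih =>
    by_cases hB : a ∈ B
    · exact ⟨a, ⟨hu, hB⟩, Jn.refl G (hp _ (by simp))⟩
    · have hb : b ∈ A := by
        by_contra hb
        have : b ∈ A ∪ B := hAB ▸ Set.mem_univ b
        exact hsep a ⟨hu, hB⟩ b ⟨this.resolve_left hb, hb⟩ e
      obtain ⟨z, hz, hj⟩ := ih hb hv (fun z hz => hp z (by simp [hz]))
      exact ⟨z, hz, (Jn.adj e (hp _ (by simp)) (hp _ (by simp))).trans hj⟩

theorem grid_row {n m : ℕ} {S : Set (Fin n × Fin m)} (r : Fin m) (a : Fin n) :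
    ∀ (d : ℕ) (b : Fin n), a.1 + d = b.1 → (∀ c : Fin n, a ≤ c → c ≤ b → (c, r) ∈ S) →
      Jn (gridGraph n m) S (a, r) (b, r) := by
  intro d
  induction d with
  | zero =>
    intro b hb hS
    have : a = b := Fin.ext (by omega)
    subst this
    exact Jn.refl _ (hS a le_rfl le_rfl)
  | succ d ih =>
    intro b hb hS
    have hb' := b.2
    have h1 := ih ⟨a.1 + d, by omega⟩ rfl
      (fun c h1 h2 => hS c h1 (by rw [Fin.le_def] at *; simp only at h2; omega))
    refine h1.trans (Jn.adj ?_ (hS _ ?_ ?_) (hS _ ?_ ?_))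
    · rw [gridGraph, SimpleGraph.fromRel_adj]
      refine ⟨?_, Or.inl (Or.inr ⟨rfl, ?_⟩)⟩
      · intro h
        have := congrArg (fun q => q.1.1) h
        simp only at this
        omega
      · simp only; omega
    all_goals (simp only [Fin.le_def] <;> omega)

theorem grid_col {n m : ℕ} {S : Set (Fin n × Fin m)} (r : Fin n) (a : Fin m) :
    ∀ (d : ℕ) (b : Fin m), a.1 + d = b.1 → (∀ c : Fin m, a ≤ c → c ≤ b → (r, c) ∈ S) →
      Jn (gridGraph n m) S (r, a) (r, b) := by
  intro d
  induction d with
  | zero =>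
    intro b hb hS
    have : a = b := Fin.ext (by omega)
    subst this
    exact Jn.refl _ (hS a le_rfl le_rfl)
  | succ d ih =>
    intro b hb hS
    have hb' := b.2
    have h1 := ih ⟨a.1 + d, by omega⟩ rfl
      (fun c h1 h2 => hS c h1 (by rw [Fin.le_def] at *; simp only at h2; omega))
    refine h1.trans (Jn.adj ?_ (hS _ ?_ ?_) (hS _ ?_ ?_))
    · rw [gridGraph, SimpleGraph.fromRel_adj]
      refine ⟨?_, Or.inl (Or.inl ⟨rfl, ?_⟩)⟩
      · intro h
        have := congrArg (fun q => q.2.1) h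
        simp only at this
        omega
      · simp only; omega
    all_goals (simp only [Fin.le_def] <;> omega)

theorem grid_row' {n m : ℕ} {S : Set (Fin n × Fin m)} (r : Fin m) (a b : Fin n)
    (h : ∀ c : Fin n, ((a ≤ c ∧ c ≤ b) ∨ (b ≤ c ∧ c ≤ a)) → (c, r) ∈ S) :
    Jn (gridGraph n m) S (a, r) (b, r) := by
  rcases le_total a b with hab | hab
  · exact grid_row r a (b.1 - a.1) b (by rw [Fin.le_def] at hab; omega)
      (fun c h1 h2 => h c (Or.inl ⟨h1, h2⟩))
  · exact (grid_row r b (a.1 - b.1) a (by rw [Fin.le_def] at hab; omega)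
      (fun c h1 h2 => h c (Or.inr ⟨h1, h2⟩))).symm

/-- upper arc -/
def arcU (a b : Fin 154) (h : ℕ) : Set (Fin 154 × Fin 154) :=
  {v | 76 ≤ v.2.1 ∧ (((v.1 = a ∨ v.1 = b) ∧ v.2.1 ≤ 76 + h) ∨
    (((a ≤ v.1 ∧ v.1 ≤ b) ∨ (b ≤ v.1 ∧ v.1 ≤ a)) ∧ v.2.1 = 76 + h))}

/-- lower arc -/
def arcD (a b : Fin 154) (h : ℕ) : Set (Fin 154 × Fin 154) :=
  {v | v.2.1 ≤ 76 ∧ (((v.1 = a ∨ v.1 = b) ∧ 76 ≤ v.2.1 + h) ∨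
    (((a ≤ v.1 ∧ v.1 ≤ b) ∨ (b ≤ v.1 ∧ v.1 ≤ a)) ∧ v.2.1 + h = 76))}

theorem arcU_conn (a b : Fin 154) (h : ℕ) (hh : h ≤ 77) :
    Jn (gridGraph 154 154) (arcU a b h) (a, (⟨76, by norm_num⟩ : Fin 154))
      (b, (⟨76, by norm_num⟩ : Fin 154)) := by
  have hc : ∀ c, c = a ∨ c = b → Jn (gridGraph 154 154) (arcU a b h)
      (c, (⟨76, by norm_num⟩ : Fin 154)) (c, (⟨76 + h, by omega⟩ : Fin 154)) := by
    intro c hc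
    refine grid_col c _ h _ rfl (fun r h1 h2 => ?_)
    rw [Fin.le_def] at h1 h2
    exact ⟨h1, Or.inl ⟨hc, h2⟩⟩
  refine (hc a (Or.inl rfl)).trans (Jn.trans ?_ (hc b (Or.inr rfl)).symm)
  refine grid_row' _ _ _ (fun c h1 => ?_)
  exact ⟨by simp, Or.inr ⟨h1, rfl⟩⟩

theorem arcD_conn (a b : Fin 154) (h : ℕ) (hh : h ≤ 76) :
    Jn (gridGraph 154 154) (arcD a b h) (a, (⟨76, by norm_num⟩ : Fin 154))
      (b, (⟨76, by norm_num⟩ : Fin 154)) := by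
  have hc : ∀ c, c = a ∨ c = b → Jn (gridGraph 154 154) (arcD a b h)
      (c, (⟨76 - h, by omega⟩ : Fin 154)) (c, (⟨76, by norm_num⟩ : Fin 154)) := by
    intro c hc
    refine grid_col c _ h _ (by simp only; omega) (fun r h1 h2 => ?_)
    rw [Fin.le_def] at h1 h2
    simp only at h1 h2
    exact ⟨h2, Or.inl ⟨hc, by simp only; omega⟩⟩
  refine (hc a (Or.inl rfl)).symm.trans (Jn.trans ?_ (hc b (Or.inr rfl)))
  refine grid_row' _ _ _ (fun c h1 => ?_)
  exact ⟨by simp, Or.inr ⟨h1, by simp only; omega⟩⟩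

/-- noncrossing -/
def NC (a b a' b' : Fin 154) : Prop :=
  ((a' < a ∧ a' < b) ∨ (a < a' ∧ b < a')) ∧ ((b' < a ∧ b' < b) ∨ (a < b' ∧ b < b'))

theorem arcU_disj {a b a' b' : Fin 154} {h h' : ℕ} (hn : NC a b a' b') (hh : h < h') :
    ∀ v ∈ arcU a b h, v ∉ arcU a' b' h' := by
  rintro ⟨c, r⟩ h1 h2
  simp only [arcU, Set.mem_ofPred_eq, NC] at *
  omega

theorem arcD_disj {a b a' b' : Fin 154} {h h' : ℕ} (hn : NC a b a' b') (hh : h < h') :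
    ∀ v ∈ arcD a b h, v ∉ arcD a' b' h' := by
  rintro ⟨c, r⟩ h1 h2
  simp only [arcD, Set.mem_ofPred_eq, NC] at *
  omega

theorem arcUD_disj {a b a' b' : Fin 154} {h h' : ℕ} (hh : 0 < h) (hh' : 0 < h')
    (hn : a ≠ a' ∧ a ≠ b' ∧ b ≠ a' ∧ b ≠ b') :
    ∀ v ∈ arcU a b h, v ∉ arcD a' b' h' := by
  rintro ⟨c, r⟩ h1 h2
  simp only [arcU, arcD, Set.mem_ofPred_eq] at *
  omega

end CGT

/-- given a 3-fat model of the `(154 × 154)`-grid in `G`, a set `W`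
consisting of one vertex from each branch set of the 77th row, and a separation `{A, B}`
of `G` with `|W ∩ A| ≥ 32` and `|W ∩ B| ≥ 32`, the separator `A ∩ B` contains a set of 32
vertices that is 3-fat 16-path-connected in `G`. -/
theorem statement15 {V : Type*} (G : SimpleGraph V)
    (Mo : CGT.FatModel G (CGT.gridGraph 154 154) 3)
    (w : Fin 154 → V) (hw : ∀ x : Fin 154, w x ∈ Mo.branch (x, (⟨76, by norm_num⟩ : Fin 154)))
    (W : Set V) (hW : W = Set.range w)
    (A B : Set V) (hAB : A ∪ B = Set.univ)
    (hsep : ∀ a ∈ A \ B, ∀ b ∈ B \ A, ¬ G.Adj a b)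
    (hA : 32 ≤ (W ∩ A).ncard) (hB : 32 ≤ (W ∩ B).ncard) :
    ∃ W' ⊆ A ∩ B, W'.ncard = 32 ∧ CGT.FatPathConn G 3 16 W' := by
  classical
  have hwinj : Function.Injective w := by
    intro x y hxy
    by_contra hne
    have := Mo.branch_disjoint (x := (x, (⟨76, by norm_num⟩ : Fin 154)))
      (y := (y, (⟨76, by norm_num⟩ : Fin 154))) (fun h => hne (congrArg Prod.fst h))
    exact Set.disjoint_left.mp this (hw x) (hxy ▸ hw y)
  have hcard : ∀ C : Set V, 32 ≤ (W ∩ C).ncard →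
      ∃ S : Finset (Fin 154), S.card = 32 ∧ ∀ i ∈ S, w i ∈ C := by
    intro C hC
    have h1 : W ∩ C = w '' ((Finset.univ.filter (fun i => w i ∈ C) : Finset (Fin 154)) : Set _) := by
      ext v
      subst hW
      simp only [Set.mem_inter_iff, Set.mem_range, Set.mem_image, Finset.coe_filter,
        Finset.mem_univ, true_and, Set.mem_ofPred_eq]
      constructor
      · rintro ⟨⟨i, rfl⟩, h⟩; exact ⟨i, h, rfl⟩
      · rintro ⟨i, h, rfl⟩; exact ⟨⟨i, rfl⟩, h⟩
    rw [h1, Set.ncard_image_of_injective _ hwinj, Set.ncard_coe_finset] at hC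
    obtain ⟨S, hS, hS'⟩ := Finset.exists_subset_card_eq hC
    exact ⟨S, hS', fun i hi => (Finset.mem_filter.mp (hS hi)).2⟩
  obtain ⟨SA, hSA, hSA'⟩ := hcard A hA
  obtain ⟨SB, hSB, hSB'⟩ := hcard B hB
  obtain ⟨x, y, hx, hy, hxy⟩ := CGT.matchLem 32 SA SB hSA hSB
  have hne : ∀ i j, i ≠ j → x i ≠ x j ∧ x i ≠ y j ∧ y i ≠ x j ∧ y i ≠ y j := by
    intro i j hij
    rcases lt_or_gt_of_ne hij with h | h
    · have := hxy i j h; omega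
    · have := hxy j i h; omega
  let U : Fin 32 → Set (Fin 154 × Fin 154) := fun i => CGT.arcU (x i) (y i) (i.1 + 1)
  have hUU : ∀ i j, i ≠ j → ∀ v ∈ U i, v ∉ U j := by
    intro i j hij v hv hv'
    rcases lt_or_gt_of_ne hij with h | h
    · exact CGT.arcU_disj (hxy i j h) (Nat.succ_lt_succ h) v hv hv'
    · exact CGT.arcU_disj (hxy j i h) (Nat.succ_lt_succ h) v hv' hv
  have hp : ∀ i, ∃ z ∈ A ∩ B, CGT.Jn G (CGT.fatSet Mo (U i)) (w (x i)) z := fun i =>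
    CGT.crossLem hAB hsep (CGT.Jn.fat Mo
      (CGT.arcU_conn (x i) (y i) (i.1 + 1) (by omega)) (hw _) (hw _))
      (hSA' _ (hx i)) (hSB' _ (hy i))
  choose p hpAB hpJ using hp
  have hpF : ∀ i, p i ∈ CGT.fatSet Mo (U i) := fun i => by
    obtain ⟨q, hq⟩ := hpJ i
    exact hq _ q.end_mem_support
  have hpd : ∀ i j, i ≠ j → ((3 : ℕ) : ℕ∞) ≤ G.edist (p i) (p j) := fun i j hij =>
    CGT.fatSet_dist Mo (hUU i j hij) (hpF i) (hpF j)
  have hpinj : Function.Injective p := by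
    intro i j hij
    by_contra hne
    have := hpd i j hne
    rw [hij, SimpleGraph.edist_self] at this
    simp at this
  have hxinj : Function.Injective x := by
    intro i j hij
    by_contra h
    exact (hne i j h).1 hij
  have hnc : (Set.range p).ncard = 32 := by
    rw [← Set.image_univ, Set.ncard_image_of_injective _ hpinj, Set.ncard_univ]
    simp
  refine ⟨Set.range p, ?_, hnc, ⟨Finset.univ.image p, by simp, ?_⟩, ?_, ?_⟩
  · rintro _ ⟨i, rfl⟩; exact hpAB i
  · rw [Finset.card_image_of_injective _ hpinj]; simp
  · rintro _ _ ⟨i, rfl⟩ ⟨j, rfl⟩ h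
    exact hpd i j (fun e => h (e ▸ rfl))
  · intro l hl A' B' hA' hB' hlA hlB
    have hc : ∀ C : Finset V, (C : Set V) ⊆ Set.range p → C.card = l →
        ((Finset.univ.filter (fun i => p i ∈ C)).image x).card = l := by
      intro C hC hCl
      rw [Finset.card_image_of_injective _ hxinj, ← hCl,
        ← Finset.card_image_of_injective _ hpinj]
      congr 1
      ext v
      simp only [Finset.mem_image, Finset.mem_filter, Finset.mem_univ, true_and]
      constructor
      · rintro ⟨i, hi, rfl⟩; exact hi
      · intro hv
        obtain ⟨i, rfl⟩ := hC hv
        exact ⟨i, hv, rfl⟩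
    obtain ⟨s, t, hs, ht, hst⟩ := CGT.matchLem l _ _ (hc A' hA' hlA) (hc B' hB' hlB)
    simp only [Finset.mem_image, Finset.mem_filter, Finset.mem_univ, true_and] at hs ht
    choose I hIA hIx using hs
    choose J hJB hJx using ht
    let D : Fin l → Set (Fin 154 × Fin 154) := fun k => CGT.arcD (s k) (t k) (k.1 + 1)
    let Z : Fin l → Set (Fin 154 × Fin 154) := fun k => U (I k) ∪ D k ∪ U (J k)
    have hst' : ∀ k m, k ≠ m → s k ≠ s m ∧ s k ≠ t m ∧ t k ≠ s m ∧ t k ≠ t m := by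
      intro i j hij
      rcases lt_or_gt_of_ne hij with h | h
      · have := hst i j h; omega
      · have := hst j i h; omega
    have hIJ : ∀ k m, k ≠ m → I k ≠ I m ∧ I k ≠ J m ∧ J k ≠ I m ∧ J k ≠ J m := by
      intro k m hkm
      obtain ⟨h1, h2, h3, h4⟩ := hst' k m hkm
      rw [← hIx, ← hIx] at h1
      rw [← hIx, ← hJx] at h2
      rw [← hJx, ← hIx] at h3
      rw [← hJx, ← hJx] at h4
      exact ⟨fun e => h1 (e ▸ rfl), fun e => h2 (e ▸ rfl), fun e => h3 (e ▸ rfl),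
        fun e => h4 (e ▸ rfl)⟩
    have hDD : ∀ k m, k ≠ m → ∀ v ∈ D k, v ∉ D m := by
      intro i j hij v hv hv'
      rcases lt_or_gt_of_ne hij with h | h
      · exact CGT.arcD_disj (hst i j h) (Nat.succ_lt_succ h) v hv hv'
      · exact CGT.arcD_disj (hst j i h) (Nat.succ_lt_succ h) v hv' hv
    have hUD : ∀ i m, i ≠ I m → i ≠ J m → ∀ v ∈ U i, v ∉ D m := by
      intro i m h1 h2
      have e1 := hne i _ h1
      have e2 := hne i _ h2
      rw [hIx] at e1
      rw [hJx] at e2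
      exact CGT.arcUD_disj (Nat.succ_pos _) (Nat.succ_pos _) ⟨e1.1, e2.1, e1.2.2.1, e2.2.2.1⟩
    have hZZ : ∀ k m, k ≠ m → ∀ v ∈ Z k, v ∉ Z m := by
      intro k m hkm v hv hv'
      obtain ⟨h1, h2, h3, h4⟩ := hIJ k m hkm
      rcases hv with (hv | hv) | hv <;> rcases hv' with (hv' | hv') | hv'
      · exact hUU _ _ h1 v hv hv'
      · exact hUD _ _ h1 h2 v hv hv'
      · exact hUU _ _ h2 v hv hv'
      · exact hUD _ _ h1.symm h3.symm v hv' hv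
      · exact hDD _ _ hkm v hv hv'
      · exact hUD _ _ h2.symm h4.symm v hv' hv
      · exact hUU _ _ h3 v hv hv'
      · exact hUD _ _ h3 h4 v hv hv'
      · exact hUU _ _ h4 v hv hv'
    have hJn : ∀ k, CGT.Jn G (CGT.fatSet Mo (Z k)) (p (I k)) (p (J k)) := by
      intro k
      have h1 := (hpJ (I k)).mono (CGT.fatSet_mono Mo (T := Z k)
        (fun v hv => Or.inl (Or.inl hv)))
      have h2 := (hpJ (J k)).mono (CGT.fatSet_mono Mo (T := Z k)
        (fun v hv => Or.inr hv))
      have h3 := (CGT.Jn.fat Mo (CGT.arcD_conn (s k) (t k) (k.1 + 1) (by omega))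
        (hw _) (hw _)).mono (CGT.fatSet_mono Mo (T := Z k) (fun v hv => Or.inl (Or.inr hv)))
      rw [hIx] at h1
      rw [hJx] at h2
      exact h1.symm.trans (h3.trans h2)
    choose P hP using hJn
    refine ⟨fun k => p (I k), fun k => p (J k), fun k => (P k).bypass,
      fun k => (P k).bypass_isPath, fun k => ⟨hIA k, hJB k⟩, ?_⟩
    intro k m hkm
    refine CGT.le_sDist (fun u hu v hv => ?_)
    exact CGT.fatSet_dist Mo (hZZ k m hkm) (hP k u ((P k).support_bypass_subset_support hu))
      (hP m v ((P m).support_bypass_subset_support hv))
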